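/- Let k ≥ 1 and let π be a permutation gate in 𝒞₃ on n qubits such that some coordinate of the polynomial representation of π contains a monomial of degree at least k. Then n ≥ 2ᵏ − 1. Moreover, for each k ≥ 3 this bound is attained: there is a permutation gate in 𝒞₃ on exactly 2ᵏ−1 qubits with a degree-k monomial in its polynomial representation. -/

import Mathlib

/-! Common framework: qubit gates, the Pauli group, the Clifford hierarchy,
permutation gates, Toffoli gates and staircase form, descending multiplications,
multilinear polynomial representations. -/

/-- Vectors in `𝔽₂ⁿ`, indexing computational basis states. -/
abbrev QV (n : ℕ) := Fin n → ZMod 2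

/-- `n`-qubit gates: `2ⁿ × 2ⁿ` complex matrices indexed by `𝔽₂ⁿ`. -/
abbrev QMat (n : ℕ) := Matrix (QV n) (QV n) ℂ

/-- Standard basis vector `eᵢ` of `𝔽₂ⁿ`. -/
def stdBasis (n : ℕ) (i : Fin n) : QV n := fun m => if m = i then 1 else 0

/-- The gate `X^u Z^z`, sending `|b⟩` to `(-1)^(z·b) |b+u⟩`. -/
noncomputable def XZGate (n : ℕ) (u z : QV n) : QMat n :=
  fun a b => if a = b + u then (-1 : ℂ) ^ (∑ i, (z i).val * (b i).val) else 0

/-- The Pauli group on `n` qubits: gates `c·P₁⊗⋯⊗Pₙ`, `c ∈ {±1, ±i}`,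
`Pᵢ ∈ {I,X,Y,Z}`, equivalently phases times `X^u Z^z`. -/
def PauliGroup (n : ℕ) : Set (QMat n) :=
  { P | ∃ (c : ℂ) (u z : QV n),
      (c = 1 ∨ c = -1 ∨ c = Complex.I ∨ c = -Complex.I) ∧ P = c • XZGate n u z }

/-- Level `k` of the Clifford hierarchy `𝒞ₖ` (level 1 is the Pauli group,
level 2 the Clifford group; level 0 is junk/empty). -/
def CliffordLevel (n : ℕ) : ℕ → Set (QMat n)
  | 0 => ∅
  | 1 => PauliGroup n
  | (k+2) => { U | U ∈ Matrix.unitaryGroup (QV n) ℂ ∧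
      ∀ P ∈ PauliGroup n, U * P * star U ∈ CliffordLevel n (k+1) }

/-- The permutation gate of a permutation `f` of `𝔽₂ⁿ`: sends `|v⟩` to `|f v⟩`. -/
noncomputable def permGate (n : ℕ) (f : QV n ≃ QV n) : QMat n :=
  fun a b => if a = f b then 1 else 0

/-- A diagonal gate. -/
def IsDiagonal (n : ℕ) (d : QMat n) : Prop := ∀ a b : QV n, a ≠ b → d a b = 0

/-- A gate is semi-Clifford if it equals `φ₁ d φ₂` for Clifford `φ₁, φ₂` and diagonal `d`. -/
def IsSemiClifford (n : ℕ) (U : QMat n) : Prop :=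
  ∃ φ₁ d φ₂ : QMat n, φ₁ ∈ CliffordLevel n 2 ∧ φ₂ ∈ CliffordLevel n 2 ∧
    IsDiagonal n d ∧ U = φ₁ * d * φ₂

/-- The underlying map of the Toffoli gate `TOF_{i,j,k}`: `v ↦ v + (vᵢvⱼ)·eₖ`. -/
def tofFun (n : ℕ) (i j k : Fin n) (v : QV n) : QV n :=
  fun m => if m = k then v m + v i * v j else v m

/-- A map on `𝔽₂ⁿ` is in staircase form if it is a product (applied left-to-right)
of pairwise distinct Toffoli gates `TOF_{i,j,k}` with `i<j<k` and with targets
nondecreasing in the order the gates are applied. -/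
def IsStaircase (n : ℕ) (g : QV n → QV n) : Prop :=
  ∃ L : List (Fin n × Fin n × Fin n),
    L.Nodup ∧
    (∀ t ∈ L, t.1 < t.2.1 ∧ t.2.1 < t.2.2) ∧
    List.Chain' (fun s t => s.2.2 ≤ t.2.2) L ∧
    g = fun v => L.foldl (fun w t => tofFun n t.1 t.2.1 t.2.2 w) v

/-- A descending multiplication on `𝔽₂ⁿ`: bilinear, associative, commutative,
`eᵢeᵢ = 0`, and for `i < j`, `eᵢeⱼ ∈ span{eₖ : k > j}`. -/
def IsDescendingMul (n : ℕ) (mul : QV n → QV n → QV n) : Prop :=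
  (∀ u v w : QV n, mul (u + v) w = mul u w + mul v w) ∧
  (∀ u v w : QV n, mul u (v + w) = mul u v + mul u w) ∧
  (∀ u v w : QV n, mul (mul u v) w = mul u (mul v w)) ∧
  (∀ u v : QV n, mul u v = mul v u) ∧
  (∀ i : Fin n, mul (stdBasis n i) (stdBasis n i) = 0) ∧
  (∀ i j : Fin n, i < j → ∀ m : Fin n, m ≤ j → mul (stdBasis n i) (stdBasis n j) m = 0)

/-- The product `∏_{i ∈ l} eᵢ` under a multiplication, for a list `l` (junk `0` on `[]`). -/
def dmProdList (n : ℕ) (mul : QV n → QV n → QV n) : List (Fin n) → QV n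
  | [] => 0
  | [i] => stdBasis n i
  | i :: j :: rest => mul (stdBasis n i) (dmProdList n mul (j :: rest))

/-- The product `∏_{i ∈ T} eᵢ` under a multiplication. -/
def dmProd (n : ℕ) (mul : QV n → QV n → QV n) (T : Finset (Fin n)) : QV n :=
  dmProdList n mul (T.sort (· ≤ ·))

/-- `g` is the map `∑_{i∈S} eᵢ ↦ ∑_{∅≠T⊆S} ∏_{i∈T} eᵢ` associated to a multiplication. -/
def dmPiSpec (n : ℕ) (mul : QV n → QV n → QV n) (g : QV n → QV n) : Prop :=
  ∀ S : Finset (Fin n),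
    g (∑ i ∈ S, stdBasis n i) = ∑ T ∈ S.powerset.erase ∅, dmProd n mul T

/-- The bilinear extension of `eᵢeⱼ := g(eᵢ+eⱼ) + eᵢ + eⱼ`. -/
def inducedMul (n : ℕ) (g : QV n → QV n) (u v : QV n) : QV n :=
  ∑ i : Fin n, ∑ j : Fin n,
    (u i * v j) • (g (stdBasis n i + stdBasis n j) + stdBasis n i + stdBasis n j)

/-- Coefficient of the monomial `∏_{i∈T} aᵢ` in the unique multilinear polynomial
over `𝔽₂` representing `g : 𝔽₂ⁿ → 𝔽₂` (Möbius inversion over `𝔽₂`). -/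
def mlCoeff (n : ℕ) (g : QV n → ZMod 2) (T : Finset (Fin n)) : ZMod 2 :=
  ∑ R ∈ T.powerset, g (∑ i ∈ R, stdBasis n i)

/-- Strictly lower triangular matrix. -/
def StrictLowerTri (n : ℕ) (A : Matrix (Fin n) (Fin n) (ZMod 2)) : Prop :=
  ∀ p q : Fin n, p ≤ q → A p q = 0

/-- Multiplication of basis vectors for the gate `U_k`: the basis of `𝔽₂^(2^k-1)` is
indexed by nonempty subsets `S ⊆ [k]`, encoded as indices `a` via the binary digits of
`a+1`; `e_S e_T = e_{S∪T}` if `S ∩ T = ∅` and `e_S e_T = 0` otherwise. -/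
def ukBasisMul (k : ℕ) (a b : Fin (2 ^ k - 1)) : QV (2 ^ k - 1) :=
  if (a.val + 1) &&& (b.val + 1) = 0 then
    (if h : a.val + b.val + 1 < 2 ^ k - 1 then stdBasis (2 ^ k - 1) ⟨a.val + b.val + 1, h⟩
     else 0)
  else 0

/-- The descending multiplication defining `U_k`, extended bilinearly. -/
def ukMul (k : ℕ) (u v : QV (2 ^ k - 1)) : QV (2 ^ k - 1) :=
  ∑ a : Fin (2 ^ k - 1), ∑ b : Fin (2 ^ k - 1), (u a * v b) • ukBasisMul k a b

/-!
Lower bound: conjugating `X^u` by a `𝒞₃` permutation `f` gives a Clifford permutation gate, so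
`x ↦ f (f⁻¹ x + u)` is affine. For `u = eᵢ` its linear part `A` satisfies `f (v + eᵢ) = A (f v)` up
to constants. Hence `1 + A` sends the vector of coefficients of `f` at a nonempty monomial `S` to
the one at `insert i S`, or to `0` if `i ∈ S`. Starting from a nonzero coefficient vector at `T`,
these maps show that the coefficient vectors at the `2 ^ |T| - 1` nonempty subsets of `T` are
linearly independent in `𝔽₂ⁿ`.

Attainment: let `I` be an ideal with square-zero elements in an `𝔽₂`-algebra. The operation
`a + b + a * b` makes `I` an elementary abelian 2-group, so there is an isomorphism `f` from
addition to it; `x ↦ f (f⁻¹ x + u)` is then affine, `f⁻¹` is quadratic, and so `f` is a `𝒞₃`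
permutation. Its coefficient at `T` is the product of the `f eᵢ` with `i ∈ T`. The augmentation
ideal of `𝔽₂[(ℤ/2)^k]` has dimension `2 ^ k - 1` and contains `k` elements with nonzero product.
-/

section InsertionMaps

variable {ι K V : Type*} [DecidableEq ι] [DivisionRing K] [AddCommGroup V] [Module K V]
  {c : Finset ι → V}

variable (K) in
/-- The family `c` admits insertion maps: for each index `i`, one linear map sends every `c S`
with `S` nonempty to `c (insert i S)`, or to `0` if `i` already lies in `S`. The coefficients of
the polynomial representation of a `𝒞₃` permutation form such a family; the constant
coefficient `c ∅` is exempt. -/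
def HasInsertionMaps (c : Finset ι → V) : Prop :=
  ∀ i, ∃ N : Module.End K V, ∀ S : Finset ι, S.Nonempty →
    N (c S) = if i ∈ S then 0 else c (insert i S)

theorem HasInsertionMaps.exists_union (hc : HasInsertionMaps K c) (R : Finset ι) :
    ∃ N : Module.End K V, ∀ S : Finset ι, S.Nonempty →
      N (c S) = if Disjoint R S then c (R ∪ S) else 0 := by
  induction R using Finset.induction_on with
  | empty => exact ⟨LinearMap.id, fun S _ => by simp⟩
  | insert i R hi ih =>
    obtain ⟨N, hN⟩ := ih
    obtain ⟨M, hM⟩ := hc i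
    refine ⟨M * N, fun S hS => ?_⟩
    rw [Module.End.mul_apply, hN S hS]
    by_cases hd : Disjoint R S
    · rw [if_pos hd, hM _ (hS.mono Finset.subset_union_right)]
      by_cases hiS : i ∈ S <;> simp [hiS, hi, hd, Finset.insert_union]
    · simp [hd, Finset.disjoint_insert_left]

theorem HasInsertionMaps.linearIndepOn (hc : HasInsertionMaps K c) {T : Finset ι}
    (hT : c T ≠ 0) : LinearIndepOn K c (T.powerset.erase ∅ : Finset (Finset ι)) := by
  rw [linearIndepOn_finset_iff]
  intro a ha S
  induction S using Finset.strongInduction with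
  | H S ih =>
    intro hS
    obtain ⟨N, hN⟩ := hc.exists_union (T \ S)
    have hNS : N (c S) = c T := by
      rw [hN S (by grind), if_pos Finset.sdiff_disjoint, Finset.sdiff_union_of_subset (by grind)]
    -- `N` kills every term except those with `S' ⊆ S`; of these only `S' = S` is left by induction.
    have hterm : ∀ S' ∈ T.powerset.erase ∅, S' ≠ S → a S' • N (c S') = 0 := by
      intro S' hS' hne
      by_cases hd : Disjoint (T \ S) S'
      · rw [ih S' (by grind [Finset.disjoint_left]) hS', zero_smul]
      · rw [hN S' (by grind), if_neg hd, smul_zero]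
    have hsum : a S • c T = 0 := by
      have h := congrArg N ha
      simp only [map_sum, map_smul, map_zero] at h
      rwa [Finset.sum_eq_single_of_mem S hS hterm, hNS] at h
    exact (smul_eq_zero.1 hsum).resolve_right hT

theorem HasInsertionMaps.two_pow_card_sub_one_le_finrank [Module.Finite K V]
    (hc : HasInsertionMaps K c) {T : Finset ι} (hT : c T ≠ 0) :
    2 ^ T.card - 1 ≤ Module.finrank K V := by
  have h := (hc.linearIndepOn hT).fintype_card_le_finrank
  simpa [Finset.card_erase_of_mem] using h

end InsertionMaps

section AffineQuadratic

variable {V W X : Type*} [AddCommGroup V] [Module (ZMod 2) V] [AddCommGroup W]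
  [Module (ZMod 2) W] [AddCommGroup X] [Module (ZMod 2) X]

/-- Affine functions between vector spaces over `𝔽₂`, that is, polynomials of degree at most 1:
the functions underlying Mathlib's bundled affine maps. -/
def IsAffineFun (g : V → W) : Prop := ∃ A : V →ᵃ[ZMod 2] W, ⇑A = g

/-- Polynomials of degree at most 2 over `𝔽₂`, defined by having affine derivatives. -/
def IsQuadraticFun (q : V → W) : Prop := ∀ w, IsAffineFun fun x => q (x + w) + q x

theorem isAffineFun_iff_map_add {g : V → W} :
    IsAffineFun g ↔ ∀ x y, g (x + y) = g x + g y + g 0 := by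
  constructor
  · rintro ⟨A, rfl⟩ x y
    have h (v : V) : A v = A.linear v + A 0 := congrFun A.decomp v
    rw [h (x + y), h x, h y, map_add, ← add_zero (_ + A 0), ← ZModModule.add_self (A 0)]
    abel
  · intro hg
    have hlin (x y : V) : g (x + y) + g 0 = (g x + g 0) + (g y + g 0) := by rw [hg]; abel
    let L : V →ₗ[ZMod 2] W :=
      (AddMonoidHom.mk' (fun x => g x + g 0) hlin).toZModLinearMap 2
    refine ⟨L.toAffineMap + AffineMap.const _ _ (g 0), funext fun x => ?_⟩
    simp [L, add_assoc, ZModModule.add_self]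

theorem IsAffineFun.add {g h : V → W} (hg : IsAffineFun g) (hh : IsAffineFun h) :
    IsAffineFun fun x => g x + h x := by
  obtain ⟨A, rfl⟩ := hg
  obtain ⟨B, rfl⟩ := hh
  exact ⟨A + B, rfl⟩

theorem IsAffineFun.comp {g : W → X} {h : V → W} (hg : IsAffineFun g) (hh : IsAffineFun h) :
    IsAffineFun fun x => g (h x) := by
  obtain ⟨A, rfl⟩ := hg
  obtain ⟨B, rfl⟩ := hh
  exact ⟨A.comp B, rfl⟩

theorem IsAffineFun.symm {g : V ≃ W} (hg : IsAffineFun g) : IsAffineFun g.symm := by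
  obtain ⟨A, hA⟩ := hg
  have hbij : Function.Bijective A := hA ▸ g.bijective
  refine ⟨(AffineEquiv.ofBijective hbij).symm, funext fun y => ?_⟩
  rw [Equiv.eq_symm_apply, ← hA]
  exact (AffineEquiv.ofBijective hbij).apply_symm_apply y

theorem isAffineFun_linearMap (L : V →ₗ[ZMod 2] W) : IsAffineFun L := ⟨L.toAffineMap, rfl⟩

theorem IsQuadraticFun.linearMap_comp {q : V → W} (hq : IsQuadraticFun q)
    (L : W →ₗ[ZMod 2] X) : IsQuadraticFun fun x => L (q x) := fun w => by
  simpa only [map_add] using (isAffineFun_linearMap L).comp (hq w)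

end AffineQuadratic

section Mobius

variable {n : ℕ} {W X : Type*} {S T : Finset (Fin n)}

/-- The coefficient of `∏_{i ∈ T} aᵢ` in the multilinear polynomial, with coefficients in `W`,
that represents `f`; `mlCoeff` is the scalar case. -/
def mobiusCoeff [AddCommMonoid W] (f : QV n → W) (T : Finset (Fin n)) : W :=
  ∑ R ∈ T.powerset, f (∑ i ∈ R, stdBasis n i)

theorem mobiusCoeff_ne_zero_iff {f : QV n → QV n} :
    mobiusCoeff f T ≠ 0 ↔ ∃ m, mlCoeff n (fun v => f v m) T ≠ 0 := by
  simp [Function.ne_iff, mobiusCoeff, mlCoeff]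

theorem mobiusCoeff_insert [AddCommMonoid W] (f : QV n → W) {i : Fin n} (hi : i ∉ S) :
    mobiusCoeff f (insert i S) =
      mobiusCoeff f S + mobiusCoeff (fun v => f (v + stdBasis n i)) S := by
  simp only [mobiusCoeff, Finset.sum_powerset_insert hi]
  congr 1
  refine Finset.sum_congr rfl fun R hR => ?_
  rw [Finset.sum_insert (fun h => hi (Finset.mem_powerset.1 hR h)), add_comm]

variable [AddCommGroup W] [Module (ZMod 2) W] [AddCommGroup X] [Module (ZMod 2) X]

theorem mobiusCoeff_add_shift (f : QV n → W) (i : Fin n) (S : Finset (Fin n)) :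
    mobiusCoeff f S + mobiusCoeff (fun v => f (v + stdBasis n i)) S =
      if i ∈ S then 0 else mobiusCoeff f (insert i S) := by
  split_ifs with hi
  · rw [← Finset.insert_erase hi]
    rw [mobiusCoeff_insert _ (Finset.notMem_erase i S),
      mobiusCoeff_insert _ (Finset.notMem_erase i S)]
    simp only [add_assoc, ZModModule.add_self, add_zero]
    rw [add_comm (mobiusCoeff _ _) (mobiusCoeff f _), ← add_assoc, ZModModule.add_self]
  · exact (mobiusCoeff_insert f hi).symm

theorem mobiusCoeff_affineMap_comp (A : W →ᵃ[ZMod 2] X) (f : QV n → W) (hS : S.Nonempty) :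
    mobiusCoeff (fun v => A (f v)) S = A.linear (mobiusCoeff f S) := by
  have hconst : (2 ^ S.card) • A 0 = 0 := by
    obtain ⟨m, hm⟩ := Nat.exists_eq_succ_of_ne_zero hS.card_pos.ne'
    rw [hm, pow_succ, mul_smul, two_nsmul, ZModModule.add_self, smul_zero]
  have h (w : W) : A w = A.linear w + A 0 := congrFun A.decomp w
  simp only [mobiusCoeff, h (f _), Finset.sum_add_distrib, Finset.sum_const, Finset.card_powerset,
    hconst, add_zero, map_sum]

end Mobius

section SignedPermutationGates

/-- The character `a ↦ (-1)^a` of `𝔽₂`. -/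
noncomputable def signChar : AddChar (ZMod 2) ℂ := AddChar.zmodChar 2 neg_one_sq

theorem star_signChar (a : ZMod 2) : star (signChar a) = signChar a := by
  simp [signChar, AddChar.zmodChar_apply]

theorem signChar_pow_four (a : ZMod 2) : signChar a ^ 4 = 1 := by
  rw [← AddChar.map_nsmul_eq_pow, show 4 • a = 0 by revert a; decide, AddChar.map_zero_eq_one]

variable {α : Type*} [DecidableEq α]

/-- The signed permutation matrix `|b⟩ ↦ (-1)^(φ b) |g b⟩`. Permutation gates and, up to a scalar,
Pauli gates have this form, and so do all their products and conjugates. -/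
noncomputable def signedPermGate (g : Equiv.Perm α) (φ : α → ZMod 2) : Matrix α α ℂ :=
  fun a b => if a = g b then signChar (φ b) else 0

theorem star_signedPermGate (g : Equiv.Perm α) (φ : α → ZMod 2) :
    star (signedPermGate g φ) = signedPermGate g⁻¹ fun b => φ (g⁻¹ b) := by
  ext a b
  have hgab : a = g⁻¹ b ↔ b = g a := by rw [Equiv.Perm.eq_inv_iff_eq, eq_comm]
  rw [Matrix.star_apply]
  by_cases h : b = g a
  · simp [signedPermGate, h, star_signChar]
  · simp only [signedPermGate, hgab, if_neg h, star_zero]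

variable [Fintype α]

theorem signedPermGate_mul (g h : Equiv.Perm α) (φ χ : α → ZMod 2) :
    signedPermGate g φ * signedPermGate h χ = signedPermGate (g * h) fun b => φ (h b) + χ b := by
  ext a b
  rw [Matrix.mul_apply, Finset.sum_eq_single (h b)]
  · simp [signedPermGate, AddChar.map_add_eq_mul]
  · intro c _ hc
    simp [signedPermGate, hc]
  · simp

theorem signedPermGate_conj (g h : Equiv.Perm α) (φ χ : α → ZMod 2) :
    signedPermGate g φ * signedPermGate h χ * star (signedPermGate g φ) =
      signedPermGate (g * h * g⁻¹) fun b => φ (h (g⁻¹ b)) + χ (g⁻¹ b) + φ (g⁻¹ b) := by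
  simp only [star_signedPermGate, signedPermGate_mul]

theorem signedPermGate_mem_unitaryGroup (g : Equiv.Perm α) (φ : α → ZMod 2) :
    signedPermGate g φ ∈ Matrix.unitaryGroup α ℂ := by
  rw [Matrix.mem_unitaryGroup_iff, star_signedPermGate, signedPermGate_mul, mul_inv_cancel]
  ext a b
  simp [signedPermGate, Matrix.one_apply, CharTwo.add_self_eq_zero]

end SignedPermutationGates

section CliffordHierarchy

variable {n : ℕ}

theorem permGate_eq_signedPermGate (f : QV n ≃ QV n) : permGate n f = signedPermGate f 0 := by
  ext a b
  simp [permGate, signedPermGate]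

theorem XZGate_eq_signedPermGate (u z : QV n) :
    XZGate n u z = signedPermGate (Equiv.addRight u) (z ⬝ᵥ ·) := by
  ext a b
  have h : z ⬝ᵥ b = ((∑ i, (z i).val * (b i).val : ℕ) : ZMod 2) := by simp [dotProduct]
  simp only [XZGate, signedPermGate, Equiv.coe_addRight, h, signChar, AddChar.zmodChar_apply']

theorem XZGate_mem_pauliGroup (u z : QV n) : XZGate n u z ∈ PauliGroup n :=
  ⟨1, u, z, Or.inl rfl, (one_smul ..).symm⟩

theorem pauliPhase_iff_pow_four_eq_one {c : ℂ} :
    (c = 1 ∨ c = -1 ∨ c = Complex.I ∨ c = -Complex.I) ↔ c ^ 4 = 1 := by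
  have hfactor : c ^ 4 - 1 = (c ^ 2 - 1 ^ 2) * (c ^ 2 - Complex.I ^ 2) := by
    rw [Complex.I_sq]; ring
  rw [← sub_eq_zero (a := c ^ 4), hfactor, mul_eq_zero, sub_eq_zero, sub_eq_zero,
    sq_eq_sq_iff_eq_or_eq_neg, sq_eq_sq_iff_eq_or_eq_neg, or_assoc]

theorem mem_unitary_of_pow_four_eq_one {c : ℂ} (hc : c ^ 4 = 1) : c ∈ unitary ℂ := by
  have hnorm := Complex.norm_eq_one_of_pow_eq_one hc four_ne_zero
  rw [Unitary.mem_iff_self_mul_star]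
  simp [Complex.mul_conj, Complex.normSq_eq_norm_sq, hnorm]

theorem smul_signedPermGate_mem_pauliGroup {c : ℂ} (hc : c ^ 4 = 1) (u : QV n)
    {φ : QV n → ZMod 2} (hφ : IsAffineFun φ) :
    c • signedPermGate (Equiv.addRight u) φ ∈ PauliGroup n := by
  obtain ⟨A, rfl⟩ := hφ
  obtain ⟨z, hz⟩ := (dotProductEquiv (ZMod 2) (Fin n)).surjective A.linear
  refine ⟨c * signChar (A 0), u, z, ?_, ?_⟩
  · rw [pauliPhase_iff_pow_four_eq_one, mul_pow, hc, signChar_pow_four, one_mul]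
  · have hA (b : QV n) : A b = A 0 + z ⬝ᵥ b := by
      rw [congrFun A.decomp b, ← hz, add_comm]
      rfl
    rw [XZGate_eq_signedPermGate, mul_smul]
    congr 1
    ext a b
    simp only [signedPermGate, hA b, AddChar.map_add_eq_mul, Matrix.smul_apply, smul_eq_mul,
      mul_ite, mul_zero]

theorem smul_signedPermGate_mem_cliffordLevel_two {c : ℂ} (hc : c ∈ unitary ℂ) {g : QV n ≃ QV n}
    (hg : IsAffineFun g) {φ : QV n → ZMod 2} (hφ : IsQuadraticFun φ) :
    c • signedPermGate g φ ∈ CliffordLevel n 2 := by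
  refine ⟨Unitary.smul_mem_of_mem hc (signedPermGate_mem_unitaryGroup g φ), ?_⟩
  rintro _ ⟨d, w, z, hd, rfl⟩
  have hconj : g * Equiv.addRight w * g⁻¹ = Equiv.addRight (g w + g 0) := by
    ext1 b
    simp [isAffineFun_iff_map_add.1 hg, add_assoc]
  have hphase : IsAffineFun fun b =>
      φ (Equiv.addRight w (g⁻¹ b)) + z ⬝ᵥ g⁻¹ b + φ (g⁻¹ b) := by
    have hz : IsAffineFun fun b => z ⬝ᵥ b :=
      isAffineFun_linearMap (dotProductBilin (ZMod 2) (ZMod 2) z)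
    simpa only [add_right_comm, Equiv.coe_addRight, Equiv.Perm.inv_def] using
      ((hφ w).add hz).comp hg.symm
  rw [star_smul, smul_mul_smul_comm, smul_mul_smul_comm, mul_right_comm,
    Unitary.mul_star_self_of_mem hc, one_mul,
    XZGate_eq_signedPermGate, signedPermGate_conj, hconj]
  exact smul_signedPermGate_mem_pauliGroup (pauliPhase_iff_pow_four_eq_one.1 hd) _ hphase

theorem permGate_mem_cliffordLevel_three {f : QV n ≃ QV n}
    (hshift : ∀ u, IsAffineFun fun x => f (f.symm x + u)) (hsymm : IsQuadraticFun f.symm) :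
    permGate n f ∈ CliffordLevel n 3 := by
  rw [permGate_eq_signedPermGate]
  refine ⟨signedPermGate_mem_unitaryGroup f _, ?_⟩
  rintro _ ⟨c, u, z, hc, rfl⟩
  have hunit := mem_unitary_of_pow_four_eq_one (pauliPhase_iff_pow_four_eq_one.1 hc)
  rw [mul_smul_comm, smul_mul_assoc, XZGate_eq_signedPermGate, signedPermGate_conj]
  refine smul_signedPermGate_mem_cliffordLevel_two hunit (hshift u) ?_
  simpa using hsymm.linearMap_comp (dotProductBilin (ZMod 2) (ZMod 2) z)

theorem permGate_conj_XZGate (f : QV n ≃ QV n) (u : QV n) :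
    permGate n f * XZGate n u 0 * star (permGate n f) =
      permGate n (f * Equiv.addRight u * f⁻¹) := by
  simp only [permGate_eq_signedPermGate, XZGate_eq_signedPermGate, signedPermGate_conj]
  congr 1
  ext b
  simp

theorem exists_eq_add_of_permGate_mem_pauliGroup {g : QV n ≃ QV n}
    (hg : permGate n g ∈ PauliGroup n) : ∃ u, ∀ b, g b = b + u := by
  obtain ⟨c, u, z, _, h⟩ := hg
  refine ⟨u, fun b => ?_⟩
  have hentry := congrFun₂ h (g b) b
  by_contra hb
  simp [permGate, XZGate, hb] at hentry

theorem isAffineFun_of_permGate_mem_cliffordLevel_two {g : QV n ≃ QV n}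
    (hg : permGate n g ∈ CliffordLevel n 2) : IsAffineFun g := by
  refine isAffineFun_iff_map_add.2 fun x w => ?_
  have hconj := hg.2 _ (XZGate_mem_pauliGroup w 0)
  rw [permGate_conj_XZGate] at hconj
  obtain ⟨u, hu⟩ := exists_eq_add_of_permGate_mem_pauliGroup hconj
  have hshift (y : QV n) : g (y + w) = g y + u := by simpa using hu (g y)
  have hw : g w = g 0 + u := by simpa using hshift 0
  rw [hshift, hw, add_assoc, add_right_comm (g 0), ZModModule.add_self, zero_add]

theorem isAffineFun_shift_of_permGate_mem_cliffordLevel_three {f : QV n ≃ QV n}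
    (hf : permGate n f ∈ CliffordLevel n 3) (u : QV n) :
    IsAffineFun fun x => f (f.symm x + u) := by
  have h := hf.2 _ (XZGate_mem_pauliGroup u 0)
  rw [permGate_conj_XZGate] at h
  exact isAffineFun_of_permGate_mem_cliffordLevel_two h

end CliffordHierarchy

section LowerBound

variable {n : ℕ} {f : QV n ≃ QV n}

theorem hasInsertionMaps_mobiusCoeff (hf : permGate n f ∈ CliffordLevel n 3) :
    HasInsertionMaps (ZMod 2) (mobiusCoeff f) := by
  intro i
  obtain ⟨A, hA⟩ := isAffineFun_shift_of_permGate_mem_cliffordLevel_three hf (stdBasis n i)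
  refine ⟨LinearMap.id + A.linear, fun S hS => ?_⟩
  have hshift : (fun v => A (f v)) = fun v => f (v + stdBasis n i) := by simp [hA]
  rw [← mobiusCoeff_add_shift, ← hshift, mobiusCoeff_affineMap_comp A f hS, LinearMap.add_apply,
    LinearMap.id_apply]

theorem two_pow_card_sub_one_le_of_mobiusCoeff_ne_zero (hf : permGate n f ∈ CliffordLevel n 3)
    {T : Finset (Fin n)} (hT : mobiusCoeff f T ≠ 0) : 2 ^ T.card - 1 ≤ n := by
  simpa using (hasInsertionMaps_mobiusCoeff hf).two_pow_card_sub_one_le_finrank hT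

end LowerBound

section CircleGroup

variable {V W R : Type*} [AddCommGroup V] [AddCommGroup W] [Module (ZMod 2) W] [CommRing R]
  [Algebra (ZMod 2) R] {ψ : W →ₗ[ZMod 2] R} {f : V ≃ W}

/-- Identifying `W` with its image under `ψ`, the map `f` is a homomorphism from addition to the
circle operation `(a, b) ↦ a + b + a * b` of the algebra `R`; the circle operation is written here
as multiplication of the elements `1 + a`. -/
def IsCircleHom (ψ : W →ₗ[ZMod 2] R) (f : V → W) : Prop :=
  ∀ x y, 1 + ψ (f (x + y)) = (1 + ψ (f x)) * (1 + ψ (f y))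

theorem IsCircleHom.apply_zero (hf : IsCircleHom ψ f) : ψ (f 0) = 0 := by
  have h := hf (f.symm 0) 0
  rw [add_zero, Equiv.apply_symm_apply, map_zero] at h
  linear_combination -h

theorem IsCircleHom.one_add_apply_sum (hf : IsCircleHom ψ f) {ι : Type*} (v : ι → V)
    (S : Finset ι) : 1 + ψ (f (∑ i ∈ S, v i)) = ∏ i ∈ S, (1 + ψ (f (v i))) := by
  classical
  induction S using Finset.induction_on with
  | empty => simp [hf.apply_zero]
  | insert i S hi ih => rw [Finset.sum_insert hi, Finset.prod_insert hi, hf, ih]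

theorem IsCircleHom.isAffineFun_shift (hψ : Function.Injective ψ) (hf : IsCircleHom ψ f) (u : V) :
    IsAffineFun fun x => f (f.symm x + u) := by
  have h (x : W) : ψ (f (f.symm x + u)) = (1 + ψ x) * (1 + ψ (f u)) - 1 := by
    have hx := hf (f.symm x) u
    rw [f.apply_symm_apply] at hx
    linear_combination hx
  refine isAffineFun_iff_map_add.2 fun x y => hψ ?_
  simp only [map_add, h, map_zero]
  linear_combination -ZModModule.add_self (ψ (f u))

variable [Module (ZMod 2) V]

theorem IsCircleHom.mul_self_eq_zero (hf : IsCircleHom ψ f) (x : W) : ψ x * ψ x = 0 := by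
  have h := hf (f.symm x) (f.symm x)
  rw [ZModModule.add_self, hf.apply_zero, Equiv.apply_symm_apply] at h
  linear_combination -h - ZModModule.add_self (ψ x)

theorem IsCircleHom.isQuadraticFun_symm (hψ : Function.Injective ψ) (hf : IsCircleHom ψ f) :
    IsQuadraticFun f.symm := by
  refine fun w => isAffineFun_iff_map_add.2 fun x y => ?_
  refine f.injective (hψ (add_left_cancel (a := 1) ?_))
  simp only [hf _ _, Equiv.apply_symm_apply, zero_add, map_zero]
  have hsq := hf.mul_self_eq_zero w
  -- Up to the constant factor `1 + ψ w`, the derivative of `f.symm` in direction `w` is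
  -- `x ↦ 1 + ψ x * ψ w`, which turns sums into products because `ψ w * ψ w = 0`.
  have hderiv (x : W) : (1 + ψ (x + w)) * (1 + ψ x) = (1 + ψ w) * (1 + ψ x * ψ w) := by
    rw [map_add]
    linear_combination hf.mul_self_eq_zero x - ψ x * hsq + ZModModule.add_self (ψ x)
  have hmul : 1 + ψ (x + y) * ψ w = (1 + ψ x * ψ w) * (1 + ψ y * ψ w) := by
    rw [map_add]
    linear_combination -ψ x * ψ y * hsq
  have hunit : (1 + ψ w) * (1 + ψ w) = 1 := by
    linear_combination hsq + ZModModule.add_self (ψ w)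
  rw [hderiv, hderiv, hderiv, hmul]
  linear_combination -(1 + ψ w) * (1 + ψ x * ψ w) * (1 + ψ y * ψ w) * hunit

end CircleGroup

section CirclePermutations

variable {n : ℕ} {R : Type*} [CommRing R] [Algebra (ZMod 2) R] {ψ : QV n →ₗ[ZMod 2] R}
  {f : QV n ≃ QV n}

theorem IsCircleHom.map_mobiusCoeff (hf : IsCircleHom ψ f) {T : Finset (Fin n)}
    (hT : T.Nonempty) : ψ (mobiusCoeff f T) = ∏ i ∈ T, ψ (f (stdBasis n i)) := by
  let A : QV n →ᵃ[ZMod 2] R := AffineMap.const _ _ 1 + ψ.toAffineMap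
  have htwo (y : R) : 1 + (1 + y) = y := by rw [← add_assoc, ZModModule.add_self, zero_add]
  calc ψ (mobiusCoeff f T)
      = A.linear (mobiusCoeff f T) := by simp [A]
    _ = mobiusCoeff (fun v => A (f v)) T := (mobiusCoeff_affineMap_comp A f hT).symm
    _ = ∑ S ∈ T.powerset, (1 + ψ (f (∑ i ∈ S, stdBasis n i))) := rfl
    _ = ∏ i ∈ T, (1 + (1 + ψ (f (stdBasis n i)))) := by
      simp only [hf.one_add_apply_sum, Finset.prod_one_add]
    _ = ∏ i ∈ T, ψ (f (stdBasis n i)) := by simp only [htwo]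

end CirclePermutations

section BasisExtension

theorem exists_basis_extending {ι K V : Type*} [Field K] [AddCommGroup V] [Module K V]
    [Module.Finite K V] {n : ℕ} (hn : Module.finrank K V = n) {v : ι → V}
    (hv : LinearIndependent K v) :
    ∃ (b : Module.Basis (Fin n) K V) (σ : ι ↪ Fin n), ∀ i, b (σ i) = v i := by
  let b := Module.Basis.extend hv.linearIndepOn_id
  have : Fintype (hv.linearIndepOn_id.extend (Set.subset_univ (Set.range v))) :=
    @Fintype.ofFinite _ (Module.Finite.finite_basis b)
  let e := Fintype.equivFinOfCardEq ((Module.finrank_eq_card_basis b).symm.trans hn)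
  let incl (i : ι) : hv.linearIndepOn_id.extend (Set.subset_univ (Set.range v)) :=
    ⟨v i, hv.linearIndepOn_id.subset_extend _ (Set.mem_range_self i)⟩
  have hincl : Function.Injective incl := fun i j h => hv.injective (congrArg Subtype.val h)
  exact ⟨b.reindex e, ⟨fun i => e (incl i), e.injective.comp hincl⟩, fun i => by simp [b, incl]⟩

theorem linearIndependent_of_sum_ne_zero {ι V : Type*} [AddCommGroup V] [Module (ZMod 2) V]
    {v : ι → V} (h : ∀ S : Finset ι, S.Nonempty → ∑ i ∈ S, v i ≠ 0) :
    LinearIndependent (ZMod 2) v := by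
  refine linearIndependent_iff'.2 fun S a ha => ?_
  have hsmul (i : ι) : a i • v i = if a i ≠ 0 then v i else 0 := by
    obtain h0 | h1 := (by decide : ∀ r : ZMod 2, r = 0 ∨ r = 1) (a i)
    · simp [h0]
    · simp [h1]
  simp only [hsmul, ← Finset.sum_filter] at ha
  simpa [Finset.filter_eq_empty_iff] using not_imp_not.2 (h _) (not_not.2 ha)

theorem stdBasis_eq_single (n : ℕ) (i : Fin n) : stdBasis n i = Pi.single i 1 := by
  ext m
  simp [stdBasis, Pi.single_apply]

end BasisExtension

section AugmentedAlgebras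

theorem prod_one_add_ne_one {ι R : Type*} [CommRing R] {x : ι → R} (hsq : ∀ i, x i * x i = 0)
    {T : Finset ι} (hT : ∏ i ∈ T, x i ≠ 0) {S : Finset ι} (hST : S ⊆ T) (hS : S.Nonempty) :
    ∏ i ∈ S, (1 + x i) ≠ 1 := by
  classical
  intro h
  obtain ⟨i, hi⟩ := hS
  have habsorb : (∏ j ∈ S.erase i, (1 + x j)) * ∏ j ∈ T.erase i, x j = ∏ j ∈ T.erase i, x j := by
    refine Finset.prod_induction _ (fun a => a * ∏ j ∈ T.erase i, x j = ∏ j ∈ T.erase i, x j)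
      (fun a b ha hb => by rw [mul_assoc, hb, ha]) (one_mul _) fun j hj => ?_
    rw [← Finset.mul_prod_erase (T.erase i) x (Finset.erase_subset_erase i hST hj), ← mul_assoc,
      add_mul, one_mul, hsq, add_zero]
  refine hT ?_
  rw [← Finset.mul_prod_erase S _ hi] at h
  rw [← Finset.mul_prod_erase T x (hST hi)]
  linear_combination (∏ j ∈ T.erase i, x j) * h - (1 + x i) * habsorb

variable {R : Type*} [CommRing R] [Algebra (ZMod 2) R] {ε : R →ₐ[ZMod 2] ZMod 2}

theorem augmentation_one_add_unit (ε : R →ₐ[ZMod 2] ZMod 2) (u : Rˣ) : ε (1 + u) = 0 := by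
  have hε : ε u ≠ 0 := (u.isUnit.map ε).ne_zero
  rw [map_add, map_one]
  exact (by decide : ∀ r : ZMod 2, r ≠ 0 → 1 + r = 0) _ hε

/-- If the augmentation ideal of `ε` has square-zero elements, then `x ↦ 1 + x` identifies it
with the group of units, each of which is its own inverse. -/
def kerEquivUnits (hε : ∀ x, ε x = 0 → x * x = 0) : LinearMap.ker ε.toLinearMap ≃ Rˣ where
  toFun x := Units.mkOfMulEqOne (1 + x) (1 + x) (by
    linear_combination hε x x.2 + ZModModule.add_self (x : R))
  invFun u := ⟨1 + u, augmentation_one_add_unit ε u⟩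
  left_inv x := Subtype.ext <| by
    change 1 + (1 + (x : R)) = x
    linear_combination ZModModule.add_self (1 : R)
  right_inv u := Units.ext <| by
    change 1 + (1 + (u : R)) = u
    linear_combination ZModModule.add_self (1 : R)

theorem coe_kerEquivUnits (hε : ∀ x, ε x = 0 → x * x = 0) (x : LinearMap.ker ε.toLinearMap) :
    (kerEquivUnits hε x : R) = 1 + x := rfl

theorem units_mul_self_eq_one (hε : ∀ x, ε x = 0 → x * x = 0) (u : Rˣ) : u * u = 1 := by
  refine Units.ext ?_
  rw [Units.val_mul, Units.val_one]
  linear_combination hε _ (augmentation_one_add_unit ε u) - ZModModule.add_self (u : R) -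
    ZModModule.add_self (1 : R)

theorem finrank_ker_algHom_add_one [Module.Finite (ZMod 2) R] (ε : R →ₐ[ZMod 2] ZMod 2) :
    Module.finrank (ZMod 2) (LinearMap.ker ε.toLinearMap) + 1 = Module.finrank (ZMod 2) R :=
  Module.Dual.finrank_ker_add_one_of_ne_zero fun h =>
    one_ne_zero ((map_one ε).symm.trans congr($h 1))

theorem finrank_additive_units [Module.Finite (ZMod 2) R] [Module (ZMod 2) (Additive Rˣ)]
    (hε : ∀ x, ε x = 0 → x * x = 0) :
    Module.finrank (ZMod 2) (Additive Rˣ) =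
      Module.finrank (ZMod 2) (LinearMap.ker ε.toLinearMap) := by
  have : Finite R := Module.finite_of_finite (ZMod 2)
  have h := Nat.card_congr ((kerEquivUnits hε).trans Additive.ofMul)
  rw [Module.natCard_eq_pow_finrank (K := ZMod 2) (V := LinearMap.ker ε.toLinearMap),
    Module.natCard_eq_pow_finrank (K := ZMod 2) (V := Additive Rˣ)] at h
  exact (Nat.pow_right_injective (Nat.card_zmod 2).ge h).symm

theorem linearIndependent_ofMul_kerEquivUnits [Module (ZMod 2) (Additive Rˣ)]
    (hε : ∀ x, ε x = 0 → x * x = 0) {ι : Type*} [Fintype ι]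
    {x : ι → LinearMap.ker ε.toLinearMap} (hprod : ∏ i, (x i : R) ≠ 0) :
    LinearIndependent (ZMod 2) fun i => Additive.ofMul (kerEquivUnits hε (x i)) := by
  refine linearIndependent_of_sum_ne_zero fun S hS h => ?_
  refine prod_one_add_ne_one (fun i => hε _ (x i).2) hprod S.subset_univ hS ?_
  simpa [coe_kerEquivUnits] using congrArg (fun u : Additive Rˣ => (u.toMul : R)) h

theorem exists_isCircleHom [Module.Finite (ZMod 2) R] (hε : ∀ x, ε x = 0 → x * x = 0) {n : ℕ}
    (hn : Module.finrank (ZMod 2) R = n + 1) {ι : Type*} [Fintype ι]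
    {x : ι → LinearMap.ker ε.toLinearMap} (hprod : ∏ i, (x i : R) ≠ 0) :
    ∃ (ψ : QV n →ₗ[ZMod 2] R) (f : QV n ≃ QV n) (σ : ι ↪ Fin n),
      Function.Injective ψ ∧ IsCircleHom ψ f ∧ ∀ i, ψ (f (stdBasis n (σ i))) = x i := by
  let _ : Module (ZMod 2) (Additive Rˣ) := AddCommGroup.zmodModule fun u => by
    rw [two_nsmul]
    exact units_mul_self_eq_one hε u.toMul
  have : Finite R := Module.finite_of_finite (ZMod 2)
  have hker : Module.finrank (ZMod 2) (LinearMap.ker ε.toLinearMap) = n :=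
    Nat.succ.inj ((finrank_ker_algHom_add_one ε).trans hn)
  obtain ⟨b, σ, hb⟩ := exists_basis_extending ((finrank_additive_units hε).trans hker)
    (linearIndependent_ofMul_kerEquivUnits hε hprod)
  let φ : QV n ≃ₗ[ZMod 2] Additive Rˣ := b.equivFun.symm
  let e : QV n ≃ₗ[ZMod 2] LinearMap.ker ε.toLinearMap :=
    LinearEquiv.ofFinrankEq _ _ (by rw [hker, Module.finrank_fin_fun])
  let f : QV n ≃ QV n :=
    φ.toEquiv.trans (Additive.toMul.trans ((kerEquivUnits hε).symm.trans e.symm.toEquiv))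
  have hf (v : QV n) : kerEquivUnits hε (e (f v)) = (φ v).toMul := by simp [f]
  refine ⟨Submodule.subtype _ ∘ₗ e.toLinearMap, f, σ,
    (Submodule.subtype_injective _).comp e.injective, fun v w => ?_, fun i => ?_⟩
  · have hcoe (v : QV n) : 1 + (e (f v) : R) = ((φ v).toMul : Rˣ) := by
      rw [← hf, coe_kerEquivUnits]
    simp [hcoe]
  · have hfx : e (f (stdBasis n (σ i))) = x i :=
      (kerEquivUnits hε).injective (by rw [hf, stdBasis_eq_single]; simp [φ, hb])
    exact congrArg Subtype.val hfx

theorem exists_permGate_mem_cliffordLevel_three [Module.Finite (ZMod 2) R]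
    (hε : ∀ x, ε x = 0 → x * x = 0) {n : ℕ} (hn : Module.finrank (ZMod 2) R = n + 1)
    {ι : Type*} [Fintype ι] [Nonempty ι] {x : ι → LinearMap.ker ε.toLinearMap}
    (hprod : ∏ i, (x i : R) ≠ 0) :
    ∃ f : QV n ≃ QV n, permGate n f ∈ CliffordLevel n 3 ∧
      ∃ T : Finset (Fin n), T.card = Fintype.card ι ∧ mobiusCoeff f T ≠ 0 := by
  obtain ⟨ψ, f, σ, hψ, hf, hfx⟩ := exists_isCircleHom hε hn hprod
  refine ⟨f, permGate_mem_cliffordLevel_three (hf.isAffineFun_shift hψ)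
    (hf.isQuadraticFun_symm hψ), Finset.univ.map σ, Finset.card_map σ, fun h => hprod ?_⟩
  calc ∏ i, (x i : R) = ∏ i ∈ Finset.univ.map σ, ψ (f (stdBasis n i)) := by simp [hfx]
    _ = ψ (mobiusCoeff f (Finset.univ.map σ)) := (hf.map_mobiusCoeff (by simp)).symm
    _ = 0 := by rw [h, map_zero]

end AugmentedAlgebras

section GroupAlgebra

variable {k : ℕ}

/-- The group algebra of `(ℤ/2)^k` over `𝔽₂`. Its augmentation ideal, of dimension `2 ^ k - 1`,
carries the extremal permutation. -/
abbrev CubeAlgebra (k : ℕ) := MonoidAlgebra (ZMod 2) (Multiplicative (QV k))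

theorem finrank_cubeAlgebra (k : ℕ) : Module.finrank (ZMod 2) (CubeAlgebra k) = 2 ^ k := by
  simp [Module.finrank_eq_card_basis (MonoidAlgebra.basis _ (ZMod 2))]

/-- The augmentation of the group algebra, the sum of the coefficients. -/
noncomputable def cubeAugmentation (k : ℕ) : CubeAlgebra k →ₐ[ZMod 2] ZMod 2 :=
  MonoidAlgebra.lift _ _ _ 1

theorem cubeAlgebra_mul_self (a : CubeAlgebra k) :
    a * a = algebraMap (ZMod 2) _ (cubeAugmentation k a) := by
  have : CharP (CubeAlgebra k) 2 :=
    charP_of_injective_algebraMap (algebraMap (ZMod 2) (CubeAlgebra k)).injective 2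
  have hfrob : frobenius (CubeAlgebra k) 2 =
      (algebraMap (ZMod 2) (CubeAlgebra k)).comp (cubeAugmentation k : _ →+* ZMod 2) := by
    refine MonoidAlgebra.ringHom_ext (fun r => ?_) fun g => ?_
    · simp [cubeAugmentation, frobenius_def, MonoidAlgebra.single_pow, ZMod.pow_card]
    · have hg : g ^ 2 = 1 := by
        rw [pow_two]
        exact ZModModule.add_self (g.toAdd : QV k)
      simp [cubeAugmentation, frobenius_def, MonoidAlgebra.single_pow, hg]
  rw [← pow_two]
  exact congr($hfrob a)

/-- The element `1 + [eᵢ]` of the augmentation ideal. -/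
noncomputable def cubeGenerator (i : Fin k) : LinearMap.ker (cubeAugmentation k).toLinearMap :=
  ⟨1 + MonoidAlgebra.of _ _ (Multiplicative.ofAdd (stdBasis k i)), by
    simp [cubeAugmentation, CharTwo.add_self_eq_zero]⟩

theorem prod_ofAdd_stdBasis_eq_one_iff {S : Finset (Fin k)} :
    ∏ i ∈ S, Multiplicative.ofAdd (stdBasis k i) = 1 ↔ S = ∅ := by
  rw [← ofAdd_sum, ofAdd_eq_one]
  simp [funext_iff, stdBasis, Finset.eq_empty_iff_forall_notMem]

theorem prod_cubeGenerator_ne_zero (k : ℕ) :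
    ∏ i : Fin k, (cubeGenerator i : CubeAlgebra k) ≠ 0 := by
  have hprod : ∏ i : Fin k, (cubeGenerator i : CubeAlgebra k) =
      ∑ S : Finset (Fin k), MonoidAlgebra.of _ _ (∏ i ∈ S, .ofAdd (stdBasis k i)) := by
    simp only [cubeGenerator, Finset.prod_one_add, Finset.powerset_univ, map_prod]
  -- Only the term `S = ∅` contributes to the coefficient of the group identity.
  have hcoeff : (∏ i : Fin k, (cubeGenerator i : CubeAlgebra k)).coeff 1 = 1 := by
    simp [hprod, MonoidAlgebra.coeff_sum, MonoidAlgebra.coeff_single, Finsupp.single_apply,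
      prod_ofAdd_stdBasis_eq_one_iff]
  intro h
  simp [h] at hcoeff

end GroupAlgebra

theorem stmt6_general :
    (∀ (k n : ℕ), ∀ f : QV n ≃ QV n,
      permGate n f ∈ CliffordLevel n 3 →
      (∃ (m : Fin n) (T : Finset (Fin n)),
        k ≤ T.card ∧ mlCoeff n (fun v => f v m) T ≠ 0) →
      2 ^ k - 1 ≤ n) ∧
    (∀ k : ℕ, k ≠ 0 → ∃ f : QV (2 ^ k - 1) ≃ QV (2 ^ k - 1),
      permGate (2 ^ k - 1) f ∈ CliffordLevel (2 ^ k - 1) 3 ∧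
      ∃ (m : Fin (2 ^ k - 1)) (T : Finset (Fin (2 ^ k - 1))),
        T.card = k ∧ mlCoeff (2 ^ k - 1) (fun v => f v m) T ≠ 0) := by
  constructor
  · rintro k n f hf ⟨m, T, hkT, hm⟩
    calc 2 ^ k - 1 ≤ 2 ^ T.card - 1 :=
          Nat.sub_le_sub_right (Nat.pow_le_pow_right two_pos hkT) 1
      _ ≤ n := two_pow_card_sub_one_le_of_mobiusCoeff_ne_zero hf
          (mobiusCoeff_ne_zero_iff.2 ⟨m, hm⟩)
  · intro k hk
    have : Nonempty (Fin k) := ⟨⟨0, Nat.pos_of_ne_zero hk⟩⟩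
    have hsq (a : CubeAlgebra k) (ha : cubeAugmentation k a = 0) : a * a = 0 := by
      rw [cubeAlgebra_mul_self, ha, map_zero]
    have hrank : Module.finrank (ZMod 2) (CubeAlgebra k) = 2 ^ k - 1 + 1 := by
      rw [finrank_cubeAlgebra, Nat.sub_add_cancel Nat.one_le_two_pow]
    obtain ⟨f, hf, T, hT, hfT⟩ :=
      exists_permGate_mem_cliffordLevel_three hsq hrank (prod_cubeGenerator_ne_zero k)
    obtain ⟨m, hm⟩ := mobiusCoeff_ne_zero_iff.1 hfT
    exact ⟨f, hf, m, T, by rw [hT, Fintype.card_fin], hm⟩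

/-- A `𝒞₃` permutation gate with a monomial of degree at least `k` in its
polynomial representation needs at least `2ᵏ−1` qubits; for `k ≥ 3` the bound is attained. -/
theorem stmt6 :
    (∀ (k n : ℕ), 1 ≤ k → 1 ≤ n → ∀ f : QV n ≃ QV n,
      permGate n f ∈ CliffordLevel n 3 →
      (∃ (m : Fin n) (T : Finset (Fin n)),
        k ≤ T.card ∧ mlCoeff n (fun v => f v m) T ≠ 0) →
      2 ^ k - 1 ≤ n) ∧
    (∀ k : ℕ, 3 ≤ k → ∃ f : QV (2 ^ k - 1) ≃ QV (2 ^ k - 1),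
      permGate (2 ^ k - 1) f ∈ CliffordLevel (2 ^ k - 1) 3 ∧
      ∃ (m : Fin (2 ^ k - 1)) (T : Finset (Fin (2 ^ k - 1))),
        T.card = k ∧ mlCoeff (2 ^ k - 1) (fun v => f v m) T ≠ 0) := by
  exact ⟨fun k n _ _ => stmt6_general.1 k n, fun k hk => stmt6_general.2 k (by lia)⟩
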